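/- Every compactum X that is the union of countably many countably tight subspaces contains, inside every non-empty open set, a point x and a closed subset F with x ∈ F such that πχ(x,F) ≤ ω; consequently every non-empty closed subspace F of such an X has a point of countable π-character in F. -/

import Mathlib

open Cardinal Set TopologicalSpace

universe u

/-- The tightness `t(X)`: the least infinite cardinal `κ` such that whenever
`x ∈ closure A` there is `B ⊆ A` with `#B ≤ κ` and `x ∈ closure B`. -/
noncomputable def tightness (X : Type u) [TopologicalSpace X] : Cardinal.{u} :=
  sInf {κ : Cardinal.{u} | ℵ₀ ≤ κ ∧ ∀ (A : Set X) (x : X), x ∈ closure A →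
    ∃ B ⊆ A, #B ≤ κ ∧ x ∈ closure B}

/-- The `κ`-closure of a set `A`. -/
noncomputable def clk {X : Type u} [TopologicalSpace X] (κ : Cardinal.{u}) (A : Set X) : Set X :=
  ⋃ (B : Set X) (_ : B ⊆ A ∧ #B ≤ κ), closure B

/-- A cover `𝒞` witnessing that `wt X ≤ κ`. -/
noncomputable def IsWtWitness {X : Type u} [TopologicalSpace X] (κ : Cardinal.{u}) (𝒞 : Set (Set X)) : Prop :=
  ⋃₀ 𝒞 = Set.univ ∧ #𝒞 ≤ 2 ^ κ ∧ ∀ C ∈ 𝒞, tightness ↥C ≤ κ ∧ clk (2 ^ κ) C = Set.univ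

/-- The weak tightness `wt(X)`. -/
noncomputable def wt (X : Type u) [TopologicalSpace X] : Cardinal.{u} :=
  sInf {κ : Cardinal.{u} | ℵ₀ ≤ κ ∧ ∃ 𝒞 : Set (Set X), IsWtWitness κ 𝒞}

/-- The Lindelöf number `L(X)`. -/
noncomputable def LindelofNumber (X : Type u) [TopologicalSpace X] : Cardinal.{u} :=
  sInf {κ : Cardinal.{u} | ℵ₀ ≤ κ ∧ ∀ 𝒰 : Set (Set X), (∀ U ∈ 𝒰, IsOpen U) →
    ⋃₀ 𝒰 = Set.univ → ∃ 𝒱 ⊆ 𝒰, #𝒱 ≤ κ ∧ ⋃₀ 𝒱 = Set.univ}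

/-- The pseudocharacter `ψ(X)`. -/
noncomputable def psi (X : Type u) [TopologicalSpace X] : Cardinal.{u} :=
  sInf {κ : Cardinal.{u} | ℵ₀ ≤ κ ∧ ∀ x : X, ∃ 𝒰 : Set (Set X),
    #𝒰 ≤ κ ∧ (∀ U ∈ 𝒰, IsOpen U ∧ x ∈ U) ∧ ⋂₀ 𝒰 = {x}}

/-- The closed pseudocharacter `ψ_c(X)`. -/
noncomputable def psic (X : Type u) [TopologicalSpace X] : Cardinal.{u} :=
  sInf {κ : Cardinal.{u} | ℵ₀ ≤ κ ∧ ∀ x : X, ∃ 𝒰 : Set (Set X),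
    #𝒰 ≤ κ ∧ (∀ U ∈ 𝒰, IsOpen U ∧ x ∈ U) ∧ (⋂ U ∈ 𝒰, closure U) = {x}}

/-- `A` is `𝒞`-saturated: `A ∩ C` is dense in `A` for every `C ∈ 𝒞`. -/
noncomputable def Saturated {X : Type u} [TopologicalSpace X] (𝒞 : Set (Set X)) (A : Set X) : Prop :=
  ∀ C ∈ 𝒞, A ⊆ closure (A ∩ C)

/-- The π-character `πχ(x, X)` of a point: least cardinality of a local π-base at `x`. -/
noncomputable def piCharPt {X : Type u} [TopologicalSpace X] (x : X) : Cardinal.{u} :=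
  sInf {κ : Cardinal.{u} | ∃ ℬ : Set (Set X), #ℬ ≤ κ ∧
    (∀ B ∈ ℬ, IsOpen B ∧ B.Nonempty) ∧ ∀ U : Set X, IsOpen U → x ∈ U → ∃ B ∈ ℬ, B ⊆ U}

/-- The π-character `πχ(X)`. -/
noncomputable def piChar (X : Type u) [TopologicalSpace X] : Cardinal.{u} :=
  ⨆ x : X, piCharPt x

/-- The character `χ(x, X)` of a point: least cardinality of a local base at `x`. -/
noncomputable def charPt {X : Type u} [TopologicalSpace X] (x : X) : Cardinal.{u} :=
  sInf {κ : Cardinal.{u} | ∃ ℬ : Set (Set X), #ℬ ≤ κ ∧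
    (∀ B ∈ ℬ, IsOpen B ∧ x ∈ B) ∧ ∀ U : Set X, IsOpen U → x ∈ U → ∃ B ∈ ℬ, B ⊆ U}

/-- The character `χ(X)`. -/
noncomputable def character (X : Type u) [TopologicalSpace X] : Cardinal.{u} :=
  ⨆ x : X, charPt x

/-- The density `d(X)`: least cardinality of a dense subset. -/
noncomputable def density (X : Type u) [TopologicalSpace X] : Cardinal.{u} :=
  sInf {κ : Cardinal.{u} | ∃ D : Set X, Dense D ∧ #D ≤ κ}

/-- A space is homogeneous if its homeomorphism group acts transitively. -/
noncomputable def Homogeneous (X : Type u) [TopologicalSpace X] : Prop :=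
  ∀ x y : X, ∃ h : X ≃ₜ X, h x = y

/-- A space is power homogeneous if some (nonempty) power of it is homogeneous. -/
noncomputable def PowerHomogeneous (X : Type u) [TopologicalSpace X] : Prop :=
  ∃ I : Type u, Nonempty I ∧ Homogeneous (I → X)

/-- A `G^c_κ`-set: `G = ⋂𝒰 = ⋂_{U ∈ 𝒰} closure U` for a family `𝒰` of `≤ κ` open sets. -/
noncomputable def GcSet {X : Type u} [TopologicalSpace X] (κ : Cardinal.{u}) (G : Set X) : Prop :=
  ∃ 𝒰 : Set (Set X), #𝒰 ≤ κ ∧ (∀ U ∈ 𝒰, IsOpen U) ∧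
    G = ⋂₀ 𝒰 ∧ G = ⋂ U ∈ 𝒰, closure U

/-- A subset is subseparable if it is contained in the closure of a countable set. -/
noncomputable def Subseparable {X : Type u} [TopologicalSpace X] (A : Set X) : Prop :=
  ∃ c : Set X, c.Countable ∧ A ⊆ closure c

open Filter Topology

/-!
Write `X` as a countable union of countably tight sets `C n`. No closed subset of such an `X` maps
onto an uncountable cube. Countable tightness gives a dichotomy for closed sets mapped onto a
subcube with countably many prescribed coordinates and for any `Σ`-product in the cube: such a set
can be shrunk to one whose part in `C n` lies either entirely over the `Σ`-product or entirely off
it. So, after one round of countably many shrinkings, for each `n` there is at most one `Σ`-product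
that cannot be avoided on `C n`. Countably many `Σ`-products do not cover the cube; choose one
distinct from all of these and shrink once more so that it is avoided on every `C n`. Yet what
remains still maps onto a subcube, and every subcube meets every `Σ`-product.

On the other hand (Šapirovskiĭ), a compactum all of whose points have `π`-character greater than `κ`
has a closed subset that maps onto a cube with more than `κ` coordinates. Independent families of
more than `κ` separated pairs provide one. If all independent families had at most `κ` members, fix
a maximal one in each non-empty open set, and close `{X}` under passing from `W` to the cells of the
family chosen for `W`; this yields at most `κ` open sets. They form a local `π`-base at no point, so
by compactness a single separated pair splits all of them that lie below one member `W`, against the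
maximality of the family chosen for `W`.
-/

/-! ### Countably tight subspaces -/

theorem exists_subset_mk_le_of_tightness_le {X : Type u} [TopologicalSpace X] {κ : Cardinal.{u}}
    (h : tightness X ≤ κ) {A : Set X} {x : X} (hx : x ∈ closure A) :
    ∃ B ⊆ A, #B ≤ κ ∧ x ∈ closure B := by
  have hne : {κ : Cardinal.{u} | ℵ₀ ≤ κ ∧ ∀ (A : Set X) (x : X), x ∈ closure A →
      ∃ B ⊆ A, #B ≤ κ ∧ x ∈ closure B}.Nonempty :=
    ⟨max ℵ₀ #X, le_max_left _ _, fun A _ hx =>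
      ⟨A, subset_rfl, (mk_set_le A).trans (le_max_right _ _), hx⟩⟩
  obtain ⟨B, hBA, hB, hxB⟩ := (csInf_mem hne).2 A x hx
  exact ⟨B, hBA, hB.trans h, hxB⟩

/-- Countable tightness of the subspace `C`, expressed with closures taken in the ambient space. -/
def IsCountablyTightSet {X : Type*} [TopologicalSpace X] (C : Set X) : Prop :=
  ∀ A ⊆ C, ∀ x ∈ closure A ∩ C, ∃ B ⊆ A, B.Countable ∧ x ∈ closure B

theorem isCountablyTightSet_of_tightness_le {X : Type u} [TopologicalSpace X] {C : Set X}
    (h : tightness C ≤ ℵ₀) : IsCountablyTightSet C := by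
  rintro A hAC x ⟨hxA, hxC⟩
  obtain ⟨A, rfl⟩ : ∃ A' : Set C, (↑) '' A' = A :=
    subset_range_iff_exists_image_eq.1 (hAC.trans_eq Subtype.range_coe.symm)
  obtain ⟨B, hBA, hB, hxB⟩ :=
    exists_subset_mk_le_of_tightness_le h (x := ⟨x, hxC⟩) (closure_subtype.2 hxA)
  exact ⟨(↑) '' B, image_mono hBA, (le_aleph0_iff_set_countable.1 hB).image _,
    closure_subtype.1 hxB⟩

theorem IsCountablyTightSet.preimage {X Y : Type*} [TopologicalSpace X] [TopologicalSpace Y]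
    {C : Set X} (hC : IsCountablyTightSet C) {f : Y → X} (hf : IsInducing f) :
    IsCountablyTightSet (f ⁻¹' C) := by
  rintro A hAC x ⟨hxA, hxC⟩
  rw [hf.closure_eq_preimage_closure_image] at hxA
  obtain ⟨B, hBA, hB, hxB⟩ := hC (f '' A) (image_subset_iff.2 hAC) (f x) ⟨hxA, hxC⟩
  obtain ⟨B', hB'A, hB'⟩ := SurjOn.exists_bijOn_subset (f := f) (s := A) hBA
  refine ⟨B', hB'A, countable_of_injective_of_countable_image hB'.injOn (hB'.image_eq ▸ hB), ?_⟩
  rwa [hf.closure_eq_preimage_closure_image, hB'.image_eq]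

/-! ### Maps of compacta onto uncountable cubes -/

theorem image_iInter_of_antitone {Y Z : Type*} [TopologicalSpace Y] [CompactSpace Y]
    [TopologicalSpace Z] [T1Space Z] {f : Y → Z} (hf : Continuous f) {K : ℕ → Set Y}
    (hanti : Antitone K) (hK : ∀ n, IsClosed (K n)) : f '' ⋂ n, K n = ⋂ n, f '' K n := by
  refine (image_iInter_subset K f).antisymm fun w hw => ?_
  have hclosed : ∀ n, IsClosed (K n ∩ f ⁻¹' {w}) := fun n =>
    (hK n).inter (isClosed_singleton.preimage hf)
  obtain ⟨x, hx⟩ := IsCompact.nonempty_iInter_of_sequence_nonempty_isCompact_isClosed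
    (fun n => K n ∩ f ⁻¹' {w}) (fun n => inter_subset_inter_left _ (hanti n.le_succ))
    (mem_iInter.1 hw) (hclosed 0).isCompact hclosed
  rw [← iInter_inter] at hx
  exact ⟨x, hx⟩

section SigmaProduct

variable {Y ι α : Type*}

/-- The `Σ`-product with base point `y`: the points of the cube `ι → α` that differ from `y` in at
most countably many coordinates. -/
def sigmaProduct (y : ι → α) : Set (ι → α) :=
  {v | v =ᶠ[cocountable] y}

theorem exists_forall_notMem_sigmaProduct [Uncountable ι] [Nontrivial α] (y : ℕ → ι → α) :
    ∃ w, ∀ n, w ∉ sigmaProduct (y n) := by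
  have hcard : #(ι × ℕ) = #ι := by
    simp [mul_eq_left (aleph0_le_mk ι) (aleph0_le_mk ι) aleph0_ne_zero]
  obtain ⟨e⟩ := Cardinal.eq.1 hcard
  -- `w` differs from `y n` at the coordinates `e (i, n)`, of which there are uncountably many.
  choose w hw using fun i => exists_ne (y (e.symm i).2 i)
  refine ⟨w, fun n hn => ?_⟩
  have hcount : {i | ¬ w i = y n i}.Countable := mem_cocountable.1 hn
  have hinj : Function.Injective fun i => e (i, n) := e.injective.comp (Prod.mk_left_injective n)
  have huniv : (fun i => e (i, n)) ⁻¹' {i | ¬ w i = y n i} = Set.univ :=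
    eq_univ_of_forall fun i => by simpa using hw (e (i, n))
  exact not_countable (countable_univ_iff.1 (huniv ▸ hcount.preimage hinj))

variable [TopologicalSpace Y]

theorem IsCountablyTightSet.closure_inter_subset_preimage_sigmaProduct [TopologicalSpace α]
    [T1Space α] {Φ : Y → ι → α} (hΦ : Continuous Φ) {C : Set Y} (hC : IsCountablyTightSet C)
    {A : Set Y} (hAC : A ⊆ C) {y : ι → α} (hA : A ⊆ Φ ⁻¹' sigmaProduct y) :
    closure A ∩ C ⊆ Φ ⁻¹' sigmaProduct y := by
  intro x hx
  obtain ⟨B, hBA, hB, hxB⟩ := hC A hAC x hx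
  have : CountableInterFilter (cocountable (α := ι)) :=
    CardinalInterFilter.toCountableInterFilter _ aleph0_lt_aleph_one
  have hagree : ∀ᶠ i in cocountable, ∀ b ∈ B, Φ b i = y i :=
    (eventually_countable_ball hB).2 fun b hb => hA (hBA hb)
  refine hagree.mono fun i hi => ?_
  have hclosed : IsClosed {x | Φ x i = y i} :=
    isClosed_singleton.preimage ((continuous_apply i).comp hΦ)
  exact closure_minimal hi hclosed hxB

/-- `H` is closed and `Φ` maps it onto a subcube, that is, onto the set of points of the cube
`ι → α` with countably many prescribed coordinates. -/
structure MapsOntoSubcube (Φ : Y → ι → α) (H : Set Y) : Prop where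
  isClosed : IsClosed H
  exists_image_eq : ∃ (a : Set ι) (z : ι → α), a.Countable ∧ Φ '' H = {w | EqOn w z a}

namespace MapsOntoSubcube

variable {Φ : Y → ι → α} {H : Set Y}

theorem image_eq_of_mem (hH : MapsOntoSubcube Φ H) :
    ∃ a : Set ι, a.Countable ∧ ∀ w ∈ Φ '' H, Φ '' H = {v | EqOn v w a} := by
  obtain ⟨a, z, ha, himage⟩ := hH.exists_image_eq
  refine ⟨a, ha, fun w hw => ?_⟩
  rw [himage] at hw ⊢
  exact ext fun v => ⟨fun hv => hv.trans hw.symm, fun hv => hv.trans hw⟩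

theorem nonempty (hH : MapsOntoSubcube Φ H) : H.Nonempty := by
  obtain ⟨a, z, -, himage⟩ := hH.exists_image_eq
  exact (himage ▸ ⟨z, eqOn_refl z a⟩ : (Φ '' H).Nonempty).of_image

theorem inter_preimage_sigmaProduct_nonempty (hH : MapsOntoSubcube Φ H) (y : ι → α) :
    (H ∩ Φ ⁻¹' sigmaProduct y).Nonempty := by
  classical
  obtain ⟨a, z, ha, himage⟩ := hH.exists_image_eq
  have hmem : a.piecewise z y ∈ Φ '' H := himage ▸ piecewise_eqOn a z y
  obtain ⟨x, hxH, hx⟩ := hmem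
  refine ⟨x, hxH, ?_⟩
  have hsigma : {i | ¬ a.piecewise z y i = y i} ⊆ a := fun i hi => by
    by_contra hia
    exact hi (piecewise_eq_of_notMem a z y hia)
  rw [mem_preimage, hx]
  exact mem_cocountable.2 (ha.mono hsigma)

variable [TopologicalSpace α]

theorem inter_preimage_eqOn [T1Space α] (hΦ : Continuous Φ) (hH : MapsOntoSubcube Φ H)
    {w : ι → α} (hw : w ∈ Φ '' H) {b : Set ι} (hb : b.Countable) :
    MapsOntoSubcube Φ (H ∩ Φ ⁻¹' {v | EqOn v w b}) := by
  obtain ⟨a, ha, himage⟩ := hH.image_eq_of_mem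
  have hclosed : IsClosed {v | EqOn v w b} := by
    simp only [EqOn, ofPred_forall]
    exact isClosed_biInter fun i _ => isClosed_singleton.preimage (continuous_apply i)
  refine ⟨hH.isClosed.inter (hclosed.preimage hΦ), a ∪ b, w, ha.union hb, ?_⟩
  rw [image_inter_preimage, himage w hw]
  exact ext fun v => eqOn_union.symm

variable [CompactSpace Y]

theorem iInter [T1Space α] (hΦ : Continuous Φ) {K : ℕ → Set Y} (hanti : Antitone K)
    (hK : ∀ n, MapsOntoSubcube Φ (K n)) : MapsOntoSubcube Φ (⋂ n, K n) := by
  have hclosed : ∀ n, IsClosed (K n) := fun n => (hK n).isClosed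
  obtain ⟨x, hx⟩ := IsCompact.nonempty_iInter_of_sequence_nonempty_isCompact_isClosed K
    (fun n => hanti n.le_succ) (fun n => (hK n).nonempty) (hclosed 0).isCompact hclosed
  choose a ha himage using fun n => (hK n).image_eq_of_mem
  refine ⟨isClosed_iInter hclosed, ⋃ n, a n, Φ x, countable_iUnion ha, ?_⟩
  calc Φ '' ⋂ n, K n = ⋂ n, Φ '' K n := image_iInter_of_antitone hΦ hanti hclosed
    _ = ⋂ n, {w | EqOn w (Φ x) (a n)} :=
      iInter_congr fun n => himage n (Φ x) (mem_image_of_mem Φ (mem_iInter.1 hx n))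
    _ = {w | EqOn w (Φ x) (⋃ n, a n)} := by
      ext w
      simp only [mem_iInter, mem_ofPred_eq, EqOn, mem_iUnion, forall_exists_index]
      exact forall_comm

theorem exists_subset_forall_of_antitone [T1Space α] (hΦ : Continuous Φ) {R : ℕ → Set Y → Prop}
    (hR : ∀ n, Antitone (R n)) (hH : MapsOntoSubcube Φ H)
    (hstep : ∀ n, ∀ K ⊆ H, MapsOntoSubcube Φ K → ∃ L ⊆ K, MapsOntoSubcube Φ L ∧ R n L) :
    ∃ K ⊆ H, MapsOntoSubcube Φ K ∧ ∀ n, R n K := by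
  choose! g hgsub hg hgR using hstep
  let K : ℕ → Set Y := fun n => Nat.rec H (fun n L => g n L) n
  have hK : ∀ n, K n ⊆ H ∧ MapsOntoSubcube Φ (K n) := by
    intro n
    induction n with
    | zero => exact ⟨subset_rfl, hH⟩
    | succ n ih => exact ⟨(hgsub n _ ih.1 ih.2).trans ih.1, hg n _ ih.1 ih.2⟩
  have hanti : Antitone K := antitone_nat_of_succ_le fun n => hgsub n _ (hK n).1 (hK n).2
  exact ⟨⋂ n, K n, iInter_subset K 0, .iInter hΦ hanti fun n => (hK n).2, fun n =>
    hR n (iInter_subset K (n + 1)) (hgR n _ (hK n).1 (hK n).2)⟩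

theorem exists_subset_disjoint_or_subset [T2Space α] (hΦ : Continuous Φ)
    (hH : MapsOntoSubcube Φ H) {C : Set Y} (hC : IsCountablyTightSet C) (y : ι → α) :
    ∃ K ⊆ H, MapsOntoSubcube Φ K ∧
      (Disjoint (K ∩ C) (Φ ⁻¹' sigmaProduct y) ∨ K ∩ C ⊆ Φ ⁻¹' sigmaProduct y) := by
  set A := H ∩ C ∩ Φ ⁻¹' sigmaProduct y
  have hAH : closure A ⊆ H := closure_minimal (fun x hx => hx.1.1) hH.isClosed
  -- If `closure A` still has the image of `H`, it works: countable tightness confines it.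
  -- Otherwise shrink `H` to the preimage of a subcube that misses the image of `closure A`.
  by_cases hfull : Φ '' H ⊆ Φ '' closure A
  · refine ⟨closure A, hAH, ⟨isClosed_closure, ?_⟩, .inr ?_⟩
    · rw [(image_mono hAH).antisymm hfull]
      exact hH.exists_image_eq
    · exact hC.closure_inter_subset_preimage_sigmaProduct hΦ (fun x hx => hx.1.2) fun x hx => hx.2
  · obtain ⟨w, hwH, hwA⟩ := not_subset.1 hfull
    have hopen : IsOpen (Φ '' closure A)ᶜ :=
      (isClosed_closure.isCompact.image hΦ).isClosed.isOpen_compl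
    obtain ⟨b, u, hu, hub⟩ := isOpen_pi_iff.1 hopen w hwA
    refine ⟨_, inter_subset_left, hH.inter_preimage_eqOn hΦ hwH b.countable_toSet, .inl ?_⟩
    refine disjoint_left.2 fun x ⟨⟨hxH, hxw⟩, hxC⟩ hxy => ?_
    have hxu : Φ x ∈ (b : Set ι).pi u := fun i hi => hxw hi ▸ (hu i hi).2
    exact hub hxu (mem_image_of_mem Φ (subset_closure ⟨⟨hxH, hxC⟩, hxy⟩))

end MapsOntoSubcube

/-- Below `H`, the set `C` can be made to miss the `Σ`-product with base point `y`: every closed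
subset of `H` mapped onto a subcube can be shrunk to one whose part in `C` has image disjoint from
that `Σ`-product. -/
def SigmaAvoidable (Φ : Y → ι → α) (C : Set Y) (y : ι → α) (H : Set Y) : Prop :=
  ∀ K ⊆ H, MapsOntoSubcube Φ K →
    ∃ L ⊆ K, MapsOntoSubcube Φ L ∧ Disjoint (L ∩ C) (Φ ⁻¹' sigmaProduct y)

theorem sigmaAvoidable_antitone (Φ : Y → ι → α) (C : Set Y) (y : ι → α) :
    Antitone (SigmaAvoidable Φ C y) :=
  fun _ _ hKH hH L hLK => hH L (hLK.trans hKH)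

variable [TopologicalSpace α] [T2Space α] {Φ : Y → ι → α} [CompactSpace Y]

theorem MapsOntoSubcube.exists_subset_forall_sigmaAvoidable (hΦ : Continuous Φ) {H : Set Y}
    (hH : MapsOntoSubcube Φ H) {C : Set Y} (hC : IsCountablyTightSet C) :
    ∃ K ⊆ H, MapsOntoSubcube Φ K ∧ ∃ y, ∀ w ∉ sigmaProduct y, SigmaAvoidable Φ C w K := by
  by_cases hconf : ∃ K ⊆ H, MapsOntoSubcube Φ K ∧ ∃ y, K ∩ C ⊆ Φ ⁻¹' sigmaProduct y
  · obtain ⟨K, hKH, hK, y, hKy⟩ := hconf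
    refine ⟨K, hKH, hK, y, fun w hw L hLK hL => ⟨L, subset_rfl, hL, disjoint_left.2 ?_⟩⟩
    rintro x ⟨hxL, hxC⟩ (hxw : Φ x =ᶠ[cocountable] w)
    exact hw (hxw.symm.trans (hKy ⟨hLK hxL, hxC⟩))
  · obtain ⟨x, -⟩ := hH.nonempty
    refine ⟨H, subset_rfl, hH, Φ x, fun w _ K hKH hK => ?_⟩
    obtain ⟨L, hLK, hL, hdisj | hsub⟩ := hK.exists_subset_disjoint_or_subset hΦ hC w
    · exact ⟨L, hLK, hL, hdisj⟩
    · exact absurd ⟨L, hLK.trans hKH, hL, w, hsub⟩ hconf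

theorem not_surjective_of_iUnion_isCountablyTightSet [Uncountable ι] [Nontrivial α]
    (hΦ : Continuous Φ) {C : ℕ → Set Y} (hcov : ⋃ n, C n = Set.univ)
    (hC : ∀ n, IsCountablyTightSet (C n)) : ¬ Function.Surjective Φ := by
  intro hsurj
  obtain ⟨z⟩ : Nonempty (ι → α) := inferInstance
  have huniv : MapsOntoSubcube Φ Set.univ :=
    ⟨isClosed_univ, ∅, z, countable_empty, by simp [hsurj.range_eq]⟩
  obtain ⟨H, -, hH, havoid⟩ := huniv.exists_subset_forall_of_antitone hΦ
    (R := fun n K => ∃ y, ∀ w ∉ sigmaProduct y, SigmaAvoidable Φ (C n) w K)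
    (fun n K L hKL ⟨y, hy⟩ => ⟨y, fun w hw => sigmaAvoidable_antitone Φ (C n) w hKL (hy w hw)⟩)
    (fun n K _ hK => hK.exists_subset_forall_sigmaAvoidable hΦ (hC n))
  choose y hy using havoid
  obtain ⟨w, hw⟩ := exists_forall_notMem_sigmaProduct y
  obtain ⟨K, -, hK, hdisj⟩ := hH.exists_subset_forall_of_antitone hΦ
    (R := fun n K => Disjoint (K ∩ C n) (Φ ⁻¹' sigmaProduct w))
    (fun n _ _ hKL => Disjoint.mono_left (inter_subset_inter_left _ hKL))
    (fun n => hy n w (hw n))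
  obtain ⟨x, hxK, hxw⟩ := hK.inter_preimage_sigmaProduct_nonempty w
  obtain ⟨n, hn⟩ := iUnion_eq_univ_iff.1 hcov x
  exact disjoint_left.1 (hdisj n) ⟨hxK, hn⟩ hxw

end SigmaProduct

/-! ### Independent families of separated pairs -/

section Independent

variable {X : Type u}

/-- For a pair of sets `p`, indexed by `Bool`, the set `p (ε p)` is the side of `p` chosen by `ε`;
the cell of `s` and `ε` in `W` is the Boolean combination of the chosen sides of the pairs in
`s`. -/
def cell (W : Set X) (s : Finset (Bool → Set X)) (ε : (Bool → Set X) → Bool) : Set X :=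
  W ∩ ⋂ p ∈ s, p (ε p)

/-- The cells in `W` of the finite subfamilies of `𝓕`. -/
def cells (W : Set X) (𝓕 : Set (Bool → Set X)) : Set (Set X) :=
  {V | ∃ s : Finset (Bool → Set X), ↑s ⊆ 𝓕 ∧ ∃ ε, cell W s ε = V}

theorem subset_of_mem_cells {W V : Set X} {𝓕 : Set (Bool → Set X)} (hV : V ∈ cells W 𝓕) :
    V ⊆ W := by
  obtain ⟨s, -, ε, rfl⟩ := hV
  exact inter_subset_left

theorem mk_cells_le {W : Set X} {𝓕 : Set (Bool → Set X)} {κ : Cardinal.{u}} (hκ : ℵ₀ ≤ κ)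
    (h𝓕 : #𝓕 ≤ κ) : #(cells W 𝓕) ≤ κ := by
  have hrange : cells W 𝓕 ⊆ range fun l : List (𝓕 × Bool) => W ∩ ⋂ q ∈ l, q.1.1 q.2 := by
    rintro _ ⟨s, hs, ε, rfl⟩
    refine ⟨s.attach.toList.map fun p : s => (⟨p.1, hs p.2⟩, ε p.1), ?_⟩
    ext x
    simp only [cell, mem_inter_iff, mem_iInter, List.mem_map, Finset.mem_toList, Finset.mem_attach,
      true_and, forall_exists_index, Subtype.forall]
    exact and_congr_right' ⟨fun h p hp => h _ p hp rfl, fun h _ p hp hq => hq ▸ h p hp⟩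
  calc #(cells W 𝓕) ≤ #(List (𝓕 × Bool)) := (mk_le_mk_of_subset hrange).trans mk_range_le
    _ ≤ max ℵ₀ #(𝓕 × Bool) := mk_list_le_max _
    _ ≤ κ := by
      refine max_le hκ ?_
      rw [mk_prod, lift_uzero]
      exact mul_le_of_le hκ h𝓕 (lift_le_aleph0.2 mk_le_aleph0 |>.trans hκ)

variable [TopologicalSpace X]

/-- A pair of open sets with disjoint closures, indexed by `Bool`. -/
structure IsSeparatedPair (p : Bool → Set X) : Prop where
  isOpen (b : Bool) : IsOpen (p b)
  disjoint_closure : Disjoint (closure (p true)) (closure (p false))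

theorem exists_isSeparatedPair [RegularSpace X] {O : Set X} {x : X} (hO : O ∈ 𝓝 x) :
    ∃ p, IsSeparatedPair p ∧ x ∈ p true ∧ Oᶜ ⊆ p false := by
  obtain ⟨K, hK, hKclosed, hKO⟩ := exists_mem_nhds_isClosed_subset hO
  obtain ⟨L, hL, hLclosed, hLK⟩ := exists_mem_nhds_isClosed_subset (interior_mem_nhds.2 hK)
  refine ⟨fun b => bif b then interior L else Kᶜ,
    ⟨Bool.rec hKclosed.isOpen_compl isOpen_interior, ?_⟩,
    mem_interior_iff_mem_nhds.2 hL, compl_subset_compl.2 hKO⟩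
  have hclosure : closure (interior L) ⊆ interior K :=
    (hLclosed.closure_interior_subset).trans hLK
  simpa only [cond_true, cond_false, closure_compl] using disjoint_compl_right_iff_subset.2 hclosure

theorem IsSeparatedPair.isClopen_preimage_closure {p : Bool → Set X} (hp : IsSeparatedPair p)
    {F : Set X} (hF : F ⊆ closure (p true) ∪ closure (p false)) :
    IsClopen ((↑) ⁻¹' closure (p true) : Set F) := by
  have hcompl : ((↑) ⁻¹' closure (p true) : Set F) = ((↑) ⁻¹' closure (p false))ᶜ := by
    ext x
    exact ⟨fun h => disjoint_left.1 hp.disjoint_closure h, (hF x.2).resolve_right⟩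
  refine ⟨isClosed_closure.preimage continuous_subtype_val, ?_⟩
  rw [hcompl]
  exact (isClosed_closure.preimage continuous_subtype_val).isOpen_compl

/-- A family of separated pairs all of whose cells in `W` are non-empty. -/
structure IsIndependentIn (W : Set X) (𝓕 : Set (Bool → Set X)) : Prop where
  isSeparatedPair : ∀ p ∈ 𝓕, IsSeparatedPair p
  nonempty_of_mem_cells : ∀ V ∈ cells W 𝓕, V.Nonempty

namespace IsIndependentIn

variable {W : Set X} {𝓕 : Set (Bool → Set X)}

theorem isOpen_of_mem_cells (h : IsIndependentIn W 𝓕) (hW : IsOpen W) {V : Set X}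
    (hV : V ∈ cells W 𝓕) : IsOpen V := by
  obtain ⟨s, hs, ε, rfl⟩ := hV
  exact hW.inter (isOpen_biInter_finset fun p hp => (h.isSeparatedPair p (hs hp)).isOpen _)

theorem sUnion {c : Set (Set (Bool → Set X))} (hc : IsChain (· ⊆ ·) c) (hne : c.Nonempty)
    (h : ∀ 𝓕 ∈ c, IsIndependentIn W 𝓕) : IsIndependentIn W (⋃₀ c) := by
  refine ⟨fun p ⟨𝓕, h𝓕, hp⟩ => (h 𝓕 h𝓕).isSeparatedPair p hp, ?_⟩
  rintro _ ⟨s, hs, ε, rfl⟩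
  obtain ⟨𝓕, h𝓕, hs𝓕⟩ := DirectedOn.exists_mem_subset_of_finite_of_subset_sUnion hne hc.directedOn
    s.finite_toSet hs
  exact (h 𝓕 h𝓕).nonempty_of_mem_cells _ ⟨s, hs𝓕, ε, rfl⟩

theorem exists_maximal (hW : W.Nonempty) : ∃ 𝓕, Maximal (IsIndependentIn W) 𝓕 := by
  have hempty : IsIndependentIn W ∅ := by
    refine ⟨fun _ hp => hp.elim, ?_⟩
    rintro _ ⟨s, hs, ε, rfl⟩
    obtain rfl : s = ∅ := by simpa using hs
    simpa [cell] using hW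
  obtain ⟨𝓕, -, h𝓕⟩ := zorn_subset_nonempty {𝓕 | IsIndependentIn W 𝓕}
    (fun c hc hchain hne => ⟨⋃₀ c, sUnion hchain hne hc, fun _ => subset_sUnion_of_mem⟩) ∅ hempty
  exact ⟨𝓕, h𝓕⟩

theorem insert_of_split (h : IsIndependentIn W 𝓕) {p : Bool → Set X} (hp : IsSeparatedPair p)
    (hsplit : ∀ V ∈ cells W 𝓕, ∀ b, (V ∩ p b).Nonempty) : IsIndependentIn W (insert p 𝓕) := by
  classical
  refine ⟨forall_mem_insert.2 ⟨hp, h.isSeparatedPair⟩, ?_⟩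
  rintro _ ⟨s, hs, ε, rfl⟩
  have herase : ↑(s.erase p) ⊆ 𝓕 := by
    rwa [Finset.coe_erase, sdiff_singleton_subset_iff]
  refine (hsplit _ ⟨s.erase p, herase, ε, rfl⟩ (ε p)).mono ?_
  rintro x ⟨⟨hxW, hx⟩, hxp⟩
  refine ⟨hxW, mem_iInter₂.2 fun q hq => ?_⟩
  obtain rfl | hqp := eq_or_ne q p
  · exact hxp
  · exact mem_iInter₂.1 hx q (Finset.mem_erase.2 ⟨hqp, hq⟩)

theorem not_maximal_of_split {p : Bool → Set X} (hp : IsSeparatedPair p)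
    (hsplit : ∀ V ∈ cells W 𝓕, ∀ b, (V ∩ p b).Nonempty) : ¬ Maximal (IsIndependentIn W) 𝓕 := by
  intro hmax
  have hmem : p ∈ 𝓕 :=
    hmax.le_of_ge (hmax.prop.insert_of_split hp hsplit) (subset_insert p 𝓕) (mem_insert p 𝓕)
  obtain ⟨x, hx, hxfalse⟩ :=
    hsplit (cell W {p} fun _ => true) ⟨{p}, by simpa using hmem, _, rfl⟩ false
  have hxtrue : x ∈ p true := by simpa using hx.2
  exact disjoint_left.1 hp.disjoint_closure (subset_closure hxtrue) (subset_closure hxfalse)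

theorem exists_forall_mem_closure [CompactSpace X] (h : IsIndependentIn W 𝓕)
    (ε : (Bool → Set X) → Bool) : ∃ x, ∀ p ∈ 𝓕, x ∈ closure (p (ε p)) := by
  have hfinite : ∀ s : Finset 𝓕, (⋂ p ∈ s, closure (p.1 (ε p))).Nonempty := by
    intro s
    refine (h.nonempty_of_mem_cells _ ⟨s.map (.subtype _), ?_, ε, rfl⟩).mono fun x hx => ?_
    · simp
    · exact mem_iInter₂.2 fun p hp =>
        subset_closure (mem_iInter₂.1 hx.2 p (Finset.mem_map_of_mem _ hp))
  obtain ⟨x, hx⟩ := CompactSpace.iInter_nonempty (fun _ => isClosed_closure) hfinite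
  exact ⟨x, fun p hp => mem_iInter.1 hx ⟨p, hp⟩⟩

theorem exists_isClosed_continuous_surjective [CompactSpace X] (h : IsIndependentIn W 𝓕) :
    ∃ (F : Set X) (Φ : F → 𝓕 → Bool), IsClosed F ∧ Continuous Φ ∧ Function.Surjective Φ := by
  let F : Set X := ⋂ p ∈ 𝓕, closure (p true) ∪ closure (p false)
  let U : 𝓕 → Set F := fun p => (↑) ⁻¹' closure (p.1 true)
  refine ⟨F, fun x p => (U p).boolIndicator x,
    isClosed_biInter fun p _ => isClosed_closure.union isClosed_closure,
    continuous_pi fun p => ?_, fun z => ?_⟩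
  · exact (continuous_boolIndicator_iff_isClopen _).2
      ((h.isSeparatedPair p p.2).isClopen_preimage_closure (biInter_subset_of_mem p.2))
  · obtain ⟨ε, rfl⟩ := (Subtype.val_injective (p := (· ∈ 𝓕))).surjective_comp_right z
    obtain ⟨x, hx⟩ := h.exists_forall_mem_closure ε
    have hxF : x ∈ F := mem_iInter₂.2 fun p hp => by
      cases hε : ε p
      · exact .inr (hε ▸ hx p hp)
      · exact .inl (hε ▸ hx p hp)
    refine ⟨⟨x, hxF⟩, funext fun p => ?_⟩
    have hxp : x ∈ closure (p.1 (ε p)) := hx p p.2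
    change (U p).boolIndicator ⟨x, hxF⟩ = ε p
    cases hε : ε p <;> rw [hε] at hxp
    · exact ((U p).notMem_iff_boolIndicator _).1
        (disjoint_right.1 (h.isSeparatedPair p p.2).disjoint_closure hxp)
    · exact ((U p).mem_iff_boolIndicator _).1 hxp

end IsIndependentIn

/-! ### Large `π`-characters and maps onto cubes -/

theorem exists_isOpen_forall_not_subset {κ : Cardinal.{u}} {x : X} (hx : κ < piCharPt x)
    {𝒱 : Set (Set X)} (hκ : #𝒱 ≤ κ) (h𝒱 : ∀ V ∈ 𝒱, IsOpen V ∧ V.Nonempty) :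
    ∃ O, IsOpen O ∧ x ∈ O ∧ ∀ V ∈ 𝒱, ¬ V ⊆ O := by
  by_contra! hbase
  exact hx.not_ge (csInf_le' ⟨𝒱, hκ, h𝒱, hbase⟩)

theorem exists_isSeparatedPair_split [CompactSpace X] [RegularSpace X] {κ : Cardinal.{u}}
    (hπ : ∀ x : X, κ < piCharPt x) {𝒱 : Set (Set X)} (hκ : #𝒱 ≤ κ) (hne : 𝒱.Nonempty)
    (h𝒱 : ∀ V ∈ 𝒱, IsOpen V ∧ V.Nonempty) :
    ∃ W ∈ 𝒱, ∃ p, IsSeparatedPair p ∧ ∀ V ∈ 𝒱, V ⊆ W → ∀ b, (V ∩ p b).Nonempty := by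
  by_contra! hcon
  -- Every point has a neighbourhood that, below any `W ∈ 𝒱`, some `V ∈ 𝒱` misses, and finitely many
  -- such neighbourhoods cover `X`.
  have hshrink : ∀ W ∈ 𝒱, ∃ V ∈ 𝒱, V ⊆ W ∧ Disjoint V Set.univ := by
    refine isCompact_univ.induction_on (p := fun S => ∀ W ∈ 𝒱, ∃ V ∈ 𝒱, V ⊆ W ∧ Disjoint V S)
      ?_ ?_ ?_ ?_
    · exact fun W hW => ⟨W, hW, subset_rfl, disjoint_empty W⟩
    · exact fun S T hST hT W hW =>
        (hT W hW).imp fun V ⟨hV, hVW, hVT⟩ => ⟨hV, hVW, hVT.mono_right hST⟩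
    · intro S T hS hT W hW
      obtain ⟨V, hV, hVW, hVS⟩ := hS W hW
      obtain ⟨V', hV', hVV', hVT⟩ := hT V hV
      exact ⟨V', hV', hVV'.trans hVW, (hVS.mono_left hVV').union_right hVT⟩
    · intro x _
      obtain ⟨O, hO, hxO, hnot⟩ := exists_isOpen_forall_not_subset (hπ x) hκ h𝒱
      obtain ⟨p, hp, hxp, hOp⟩ := exists_isSeparatedPair (hO.mem_nhds hxO)
      refine ⟨p true, mem_nhdsWithin_of_mem_nhds ((hp.isOpen true).mem_nhds hxp), fun W hW => ?_⟩
      obtain ⟨V, hV, hVW, b, hVb⟩ := hcon W hW p hp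
      obtain ⟨v, hv, hvO⟩ := not_subset.1 (hnot V hV)
      cases b with
      | false => exact absurd hVb (nonempty_iff_ne_empty.1 ⟨v, hv, hOp hvO⟩)
      | true => exact ⟨V, hV, hVW, disjoint_iff_inter_eq_empty.2 hVb⟩
  obtain ⟨W, hW⟩ := hne
  obtain ⟨V, hV, -, hdisj⟩ := hshrink W hW
  exact (h𝒱 V hV).2.ne_empty (disjoint_univ.1 hdisj)

end Independent

theorem exists_mk_le_forall_subset {α : Type u} {κ : Cardinal.{u}} (hκ : ℵ₀ ≤ κ) {P : α → Prop}
    {f : α → Set α} (hf : ∀ a, P a → #(f a) ≤ κ ∧ ∀ b ∈ f a, P b) {a : α} (ha : P a) :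
    ∃ S : Set α, a ∈ S ∧ #S ≤ κ ∧ ∀ b ∈ S, P b ∧ f b ⊆ S := by
  let S : ℕ → Set α := fun n => (fun T => ⋃ b ∈ T, f b)^[n] {a}
  have hsucc : ∀ n, S (n + 1) = ⋃ b ∈ S n, f b := fun n => Function.iterate_succ_apply' _ n _
  have hS : ∀ n, #(S n) ≤ κ ∧ ∀ b ∈ S n, P b := by
    intro n
    induction n with
    | zero => exact ⟨(mk_singleton a).trans_le (one_le_aleph0.trans hκ), fun b hb => hb ▸ ha⟩
    | succ n ih =>
      rw [hsucc]
      refine ⟨(mk_biUnion_le f (S n)).trans (mul_le_of_le hκ ih.1 (ciSup_le' ?_)), ?_⟩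
      · exact fun b => (hf b (ih.2 b b.2)).1
      · intro c hc
        obtain ⟨b, hb, hcb⟩ := mem_iUnion₂.1 hc
        exact (hf b (ih.2 b hb)).2 c hcb
  refine ⟨⋃ n, S n, mem_iUnion.2 ⟨0, rfl⟩, ?_, fun b hb => ?_⟩
  · calc #(⋃ n, S n) ≤ ℵ₀ * ⨆ n, #(S n) := by simpa using mk_iUnion_le_lift S
      _ ≤ κ := mul_le_of_le hκ hκ (ciSup_le' fun n => (hS n).1)
  · obtain ⟨n, hn⟩ := mem_iUnion.1 hb
    exact ⟨(hS n).2 b hn, fun c hc => mem_iUnion.2 ⟨n + 1, hsucc n ▸ mem_iUnion₂.2 ⟨b, hn, hc⟩⟩⟩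

theorem exists_isIndependentIn_lt_mk {X : Type u} [TopologicalSpace X] [CompactSpace X]
    [RegularSpace X] [Nonempty X] {κ : Cardinal.{u}} (hκ : ℵ₀ ≤ κ)
    (hπ : ∀ x : X, κ < piCharPt x) :
    ∃ (W : Set X) (𝓕 : Set (Bool → Set X)), κ < #𝓕 ∧ IsIndependentIn W 𝓕 := by
  by_contra! hcon
  choose! 𝓕 h𝓕 using fun (W : Set X) (hW : W.Nonempty) => IsIndependentIn.exists_maximal hW
  have hsmall : ∀ W : Set X, W.Nonempty → #(𝓕 W) ≤ κ := fun W hW => by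
    by_contra! hlt
    exact hcon W (𝓕 W) hlt (h𝓕 W hW).prop
  obtain ⟨𝒱, huniv, h𝒱κ, h𝒱⟩ := exists_mk_le_forall_subset hκ
    (P := fun W : Set X => IsOpen W ∧ W.Nonempty) (f := fun W => cells W (𝓕 W))
    (fun W hW => ⟨mk_cells_le hκ (hsmall W hW.2), fun V hV =>
      ⟨(h𝓕 W hW.2).prop.isOpen_of_mem_cells hW.1 hV, (h𝓕 W hW.2).prop.nonempty_of_mem_cells V hV⟩⟩)
    ⟨isOpen_univ, univ_nonempty⟩
  obtain ⟨W, hW, p, hp, hsplit⟩ :=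
    exists_isSeparatedPair_split hπ h𝒱κ ⟨_, huniv⟩ fun V hV => (h𝒱 V hV).1
  obtain ⟨⟨-, hWne⟩, hcells⟩ := h𝒱 W hW
  exact IsIndependentIn.not_maximal_of_split hp
    (fun V hV => hsplit V (hcells hV) (subset_of_mem_cells hV)) (h𝓕 W hWne)

theorem exists_isClosed_surjective_of_lt_piCharPt {X : Type u} [TopologicalSpace X]
    [CompactSpace X] [RegularSpace X] [Nonempty X] {κ : Cardinal.{u}} (hκ : ℵ₀ ≤ κ)
    (hπ : ∀ x : X, κ < piCharPt x) :
    ∃ (F : Set X) (ι : Type u) (Φ : F → ι → Bool),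
      IsClosed F ∧ κ < #ι ∧ Continuous Φ ∧ Function.Surjective Φ := by
  obtain ⟨W, 𝓕, hlt, h𝓕⟩ := exists_isIndependentIn_lt_mk hκ hπ
  obtain ⟨F, Φ, hF, hΦ, hsurj⟩ := h𝓕.exists_isClosed_continuous_surjective
  exact ⟨F, 𝓕, Φ, hF, hlt, hΦ, hsurj⟩

/-! ### Points of countable `π`-character -/

theorem exists_piCharPt_le_aleph0 {X : Type u} [TopologicalSpace X] [CompactSpace X]
    [RegularSpace X] [Nonempty X] {C : ℕ → Set X} (hcov : ⋃ n, C n = Set.univ)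
    (hC : ∀ n, IsCountablyTightSet (C n)) : ∃ x : X, piCharPt x ≤ ℵ₀ := by
  by_contra! hπ
  obtain ⟨F, ι, Φ, hF, hι, hΦ, hsurj⟩ := exists_isClosed_surjective_of_lt_piCharPt le_rfl hπ
  have : CompactSpace F := isCompact_iff_compactSpace.1 hF.isCompact
  have : Uncountable ι := aleph0_lt_mk_iff.1 hι
  exact not_surjective_of_iUnion_isCountablyTightSet hΦ (C := fun n => (↑) ⁻¹' C n)
    (by rw [← preimage_iUnion, hcov, preimage_univ]) (fun n => (hC n).preimage .subtypeVal) hsurj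

theorem stmt19_general {X : Type u} [TopologicalSpace X] [CompactSpace X] [RegularSpace X]
    (C : ℕ → Set X) (hcov : ⋃ n, C n = Set.univ)
    (hct : ∀ n, tightness ↥(C n) ≤ ℵ₀) :
    (∀ U : Set X, IsOpen U → U.Nonempty →
      ∃ F : Set X, IsClosed F ∧ F ⊆ U ∧ ∃ x : ↥F, piCharPt x ≤ ℵ₀) ∧
    (∀ F : Set X, IsClosed F → F.Nonempty → ∃ x : ↥F, piCharPt x ≤ ℵ₀) := by
  have hclosed : ∀ F : Set X, IsClosed F → F.Nonempty → ∃ x : ↥F, piCharPt x ≤ ℵ₀ := by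
    intro F hF hne
    have : CompactSpace F := isCompact_iff_compactSpace.1 hF.isCompact
    have : Nonempty F := hne.to_subtype
    exact exists_piCharPt_le_aleph0 (C := fun n => (↑) ⁻¹' C n)
      (by rw [← preimage_iUnion, hcov, preimage_univ])
      fun n => (isCountablyTightSet_of_tightness_le (hct n)).preimage .subtypeVal
  refine ⟨fun U hU ⟨x, hx⟩ => ?_, hclosed⟩
  obtain ⟨F, hFx, hF, hFU⟩ := exists_mem_nhds_isClosed_subset (hU.mem_nhds hx)
  exact ⟨F, hF, hFU, hclosed F hF ⟨x, mem_of_mem_nhds hFx⟩⟩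

/-- Lemma 2.4 of Juhász–van Mill: in a σ-CT compactum, every non-empty
open set contains a closed set with a point of countable π-character in it; consequently
every non-empty closed subspace has a point of countable π-character. -/
theorem stmt19 {X : Type u} [TopologicalSpace X] [CompactSpace X] [T2Space X]
    (C : ℕ → Set X) (hcov : ⋃ n, C n = Set.univ)
    (hct : ∀ n, tightness ↥(C n) ≤ ℵ₀) :
    (∀ U : Set X, IsOpen U → U.Nonempty →
      ∃ F : Set X, IsClosed F ∧ F ⊆ U ∧ ∃ x : ↥F, piCharPt x ≤ ℵ₀) ∧
    (∀ F : Set X, IsClosed F → F.Nonempty → ∃ x : ↥F, piCharPt x ≤ ℵ₀) :=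
  stmt19_general C hcov hct
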